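/- arXiv:1307.0629 — 2 statements merged into one kernel-verified Lean document; each statement's English description precedes it below -/
import Mathlib

section
/- Let n ≥ 1 and r > 0. Let R : [0,1] × [−r,0] → Mat_n(ℝ) be continuously differentiable with R(s,t) symmetric for every (s,t), and let U : [0,1] × [−r,0] → Mat_n(ℝ) be twice continuously differentiable such that for every s ∈ [0,1]: ∂ₜ²U(s,t) + R(s,t)·U(s,t) = 0 for all t ∈ [−r,0], U(s,0) = Id, and U(s,−r) = 0. Then ∂ₜU(1,0) − ∂ₜU(0,0) = − ∫₀¹ ∫_{−r}⁰ U(s,t)ᵀ · (∂ₛR(s,t)) · U(s,t) dt ds. -/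
open Matrix MeasureTheory Set

/-!
For two parameters `s` and `σ`, the Wronskian `U(s,t)* ∂ₜU(σ,t) - ∂ₜU(s,t)* U(σ,t)` has
`t`-derivative `-U(s,t)* (R(σ,t) - R(s,t)) U(σ,t)`, by the Jacobi equation and `R* = R`. It vanishes
at the end where `U = 0` and equals `∂ₜU(σ,·) - ∂ₜU(s,·)*` at the end where `U = 1`. There `σ = s`
shows that `∂ₜU(s,·)` is self-adjoint, so that dividing by `σ - s` and letting `σ → s` under the
integral sign gives `∂ₛ∂ₜU = -∫ U* (∂ₛR) U dt`, which is then integrated over `s`. Comparing two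
parameters, instead of differentiating the Jacobi equation in `s`, uses no `s`-derivative of `U`.
-/

open Filter Function Topology
open scoped Matrix.Norms.L2Operator

section NormedSpace

variable {E : Type*} [NormedAddCommGroup E] [NormedSpace ℝ E] {a b : ℝ}

theorem norm_slope_le_of_norm_hasDerivWithinAt_le {S : Set ℝ} {f f' : ℝ → E} {C s σ : ℝ}
    (hS : Convex ℝ S) (hf : ∀ x ∈ S, HasDerivWithinAt f (f' x) S x)
    (hC : ∀ x ∈ S, ‖f' x‖ ≤ C) (hs : s ∈ S) (hσ : σ ∈ S) (hne : σ ≠ s) : ‖slope f s σ‖ ≤ C := by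
  rw [slope_def_module, norm_smul, norm_inv,
    inv_mul_le_iff₀ (norm_pos_iff.2 (sub_ne_zero.2 hne)), mul_comm]
  exact hS.norm_image_sub_le_of_norm_hasDerivWithin_le hf hC hs hσ

theorem tendsto_intervalIntegral_of_continuousOn_of_bounded {ι : Type*} {l : Filter ι}
    [l.IsCountablyGenerated] {F : ι → ℝ → E} {f : ℝ → E} {C : ℝ}
    (hF : ∀ᶠ i in l, ContinuousOn (F i) (uIcc a b))
    (hC : ∀ᶠ i in l, ∀ t ∈ uIcc a b, ‖F i t‖ ≤ C)
    (hlim : ∀ t ∈ uIcc a b, Tendsto (F · t) l (𝓝 (f t))) :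
    Tendsto (fun i => ∫ t in a..b, F i t) l (𝓝 (∫ t in a..b, f t)) := by
  refine intervalIntegral.tendsto_integral_filter_of_dominated_convergence (fun _ => C) ?_ ?_
    intervalIntegrable_const (.of_forall fun t ht => hlim t (uIoc_subset_uIcc ht))
  · filter_upwards [hF] with i hi
    exact (hi.mono uIoc_subset_uIcc).aestronglyMeasurable measurableSet_uIoc
  · filter_upwards [hC] with i hi
    exact .of_forall fun t ht => hi t (uIoc_subset_uIcc ht)

theorem continuousOn_intervalIntegral_of_isCompact {X : Type*} [TopologicalSpace X]
    [FirstCountableTopology X] {S : Set X} {f : X → ℝ → E} (hS : IsCompact S)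
    (hf : ContinuousOn (uncurry f) (S ×ˢ uIcc a b)) :
    ContinuousOn (fun s => ∫ t in a..b, f s t) S := by
  intro s hs
  obtain ⟨C, hC⟩ := (hS.prod isCompact_uIcc).exists_bound_of_continuousOn hf
  refine tendsto_intervalIntegral_of_continuousOn_of_bounded (C := C) ?_ ?_
    fun t ht => hf.uncurry_right t ht s hs
  · filter_upwards [self_mem_nhdsWithin] with σ hσ using hf.uncurry_left σ hσ
  · filter_upwards [self_mem_nhdsWithin] with σ hσ t ht using hC (σ, t) ⟨hσ, ht⟩

theorem intervalIntegral_eq_sub_of_hasDerivWithinAt [CompleteSpace E] {f f' : ℝ → E}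
    (hf : ∀ t ∈ uIcc a b, HasDerivWithinAt f (f' t) (uIcc a b) t)
    (hf' : ContinuousOn f' (uIcc a b)) : ∫ t in a..b, f' t = f b - f a :=
  intervalIntegral.integral_eq_sub_of_hasDeriv_right (fun t ht => (hf t ht).continuousWithinAt)
    (fun t ht => ((hf t (Ioo_subset_Icc_self ht)).hasDerivAt
      (Icc_mem_nhds ht.1 ht.2)).hasDerivWithinAt) hf'.intervalIntegrable

end NormedSpace

section NormedAlgebra

variable {A : Type*} [NormedRing A] [NormedAlgebra ℝ A] {a b : ℝ}

theorem tendsto_intervalIntegral_mul_slope_mul {S : Set ℝ} {s : ℝ} {u : ℝ → A}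
    {f f' v : ℝ → ℝ → A} (hS : Convex ℝ S) (hSc : IsCompact S) (hs : s ∈ S)
    (hu : ContinuousOn u (uIcc a b)) (hf : ∀ σ ∈ S, ContinuousOn (f σ) (uIcc a b))
    (hff' : ∀ σ ∈ S, ∀ t ∈ uIcc a b, HasDerivWithinAt (f · t) (f' σ t) S σ)
    (hf' : ContinuousOn (uncurry f') (S ×ˢ uIcc a b))
    (hv : ContinuousOn (uncurry v) (S ×ˢ uIcc a b)) :
    Tendsto (fun σ => ∫ t in a..b, u t * slope (f · t) s σ * v σ t) (𝓝[S \ {s}] s)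
      (𝓝 (∫ t in a..b, u t * f' s t * v s t)) := by
  obtain ⟨Cu, hCu⟩ := isCompact_uIcc.exists_bound_of_continuousOn hu
  obtain ⟨Cf, hCf⟩ := (hSc.prod isCompact_uIcc).exists_bound_of_continuousOn hf'
  obtain ⟨Cv, hCv⟩ := (hSc.prod isCompact_uIcc).exists_bound_of_continuousOn hv
  refine tendsto_intervalIntegral_of_continuousOn_of_bounded (C := Cu * Cf * Cv) ?_ ?_ ?_
  · filter_upwards [self_mem_nhdsWithin] with σ hσ
    simp only [slope_def_module]
    exact (hu.mul (((hf σ hσ.1).sub (hf s hs)).const_smul _)).mul (hv.uncurry_left σ hσ.1)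
  · filter_upwards [self_mem_nhdsWithin] with σ hσ t ht
    have hslope : ‖slope (f · t) s σ‖ ≤ Cf :=
      norm_slope_le_of_norm_hasDerivWithinAt_le hS (fun x hx => hff' x hx t ht)
        (fun x hx => hCf (x, t) ⟨hx, ht⟩) hs hσ.1 hσ.2
    exact norm_mul_le_of_le (norm_mul_le_of_le (hCu t ht) hslope) (hCv (σ, t) ⟨hσ.1, ht⟩)
  · intro t ht
    exact ((hasDerivWithinAt_iff_tendsto_slope.1 (hff' s hs t ht)).const_mul (u t)).mul
      ((hv.uncurry_right t ht s hs).mono_left (nhdsWithin_mono _ sdiff_subset))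

/-- `Y` solves the Jacobi equation `Y'' + R Y = 0` on `S`, with one-sided derivatives at the
boundary of `S`. The derivative `Y'` of `Y` is part of the data. -/
structure IsJacobiSolutionOn (R Y Y' : ℝ → A) (S : Set ℝ) : Prop where
  hasDerivWithinAt : ∀ t ∈ S, HasDerivWithinAt Y (Y' t) S t
  hasDerivWithinAt_deriv : ∀ t ∈ S, HasDerivWithinAt Y' (-(R t * Y t)) S t

theorem IsJacobiSolutionOn.continuousOn {R Y Y' : ℝ → A} {S : Set ℝ}
    (hY : IsJacobiSolutionOn R Y Y' S) : ContinuousOn Y S :=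
  fun t ht => (hY.hasDerivWithinAt t ht).continuousWithinAt

variable [StarRing A] [StarModule ℝ A] [ContinuousStar A]

/-- The Wronskian `Y* Z' - Y'* Z` of two solutions `Y` and `Z` of Jacobi equations, with `Y'` and
`Z'` standing for their derivatives. -/
def jacobiWronskian (Y Y' Z Z' : ℝ → A) (t : ℝ) : A :=
  star (Y t) * Z' t - star (Y' t) * Z t

theorem IsJacobiSolutionOn.hasDerivWithinAt_jacobiWronskian {P Q Y Y' Z Z' : ℝ → A} {S : Set ℝ}
    {t : ℝ} (hY : IsJacobiSolutionOn P Y Y' S) (hZ : IsJacobiSolutionOn Q Z Z' S) (ht : t ∈ S) :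
    HasDerivWithinAt (jacobiWronskian Y Y' Z Z') (-(star (Y t) * (Q t - star (P t)) * Z t)) S
      t := by
  have hderiv :=
    ((hY.hasDerivWithinAt t ht).star.mul (hZ.hasDerivWithinAt_deriv t ht)).sub
      ((hY.hasDerivWithinAt_deriv t ht).star.mul (hZ.hasDerivWithinAt t ht))
  refine hderiv.congr_deriv ?_
  rw [star_neg, star_mul]
  noncomm_ring

variable [CompleteSpace A]

theorem IsJacobiSolutionOn.jacobiWronskian_sub {P Q Y Y' Z Z' : ℝ → A}
    (hY : IsJacobiSolutionOn P Y Y' (uIcc a b)) (hZ : IsJacobiSolutionOn Q Z Z' (uIcc a b))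
    (hP : ContinuousOn P (uIcc a b)) (hQ : ContinuousOn Q (uIcc a b)) :
    jacobiWronskian Y Y' Z Z' b - jacobiWronskian Y Y' Z Z' a
      = -∫ t in a..b, star (Y t) * (Q t - star (P t)) * Z t := by
  rw [← intervalIntegral.integral_neg]
  exact (intervalIntegral_eq_sub_of_hasDerivWithinAt
    (fun t ht => hY.hasDerivWithinAt_jacobiWronskian hZ ht)
    ((hY.continuousOn.star.mul (hQ.sub hP.star)).mul hZ.continuousOn).neg).symm

theorem IsJacobiSolutionOn.deriv_sub_star_deriv {P Q Y Y' Z Z' : ℝ → A}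
    (hY : IsJacobiSolutionOn P Y Y' (uIcc a b)) (hZ : IsJacobiSolutionOn Q Z Z' (uIcc a b))
    (hP : ContinuousOn P (uIcc a b)) (hQ : ContinuousOn Q (uIcc a b))
    (hPsa : ∀ t ∈ uIcc a b, IsSelfAdjoint (P t)) (hYa : Y a = 0) (hYb : Y b = 1) (hZa : Z a = 0)
    (hZb : Z b = 1) :
    Z' b - star (Y' b) = -∫ t in a..b, star (Y t) * (Q t - P t) * Z t := by
  have hgreen := hY.jacobiWronskian_sub hZ hP hQ
  simp only [jacobiWronskian, hYa, hYb, hZa, hZb, star_zero, star_one, zero_mul, mul_zero, one_mul,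
    mul_one, sub_zero] at hgreen
  rw [hgreen]
  congr 1
  refine intervalIntegral.integral_congr fun t ht => ?_
  simp only [(hPsa t ht).star_eq]

theorem IsJacobiSolutionOn.isSelfAdjoint_deriv {P Y Y' : ℝ → A}
    (hY : IsJacobiSolutionOn P Y Y' (uIcc a b)) (hP : ContinuousOn P (uIcc a b))
    (hPsa : ∀ t ∈ uIcc a b, IsSelfAdjoint (P t)) (hYa : Y a = 0) (hYb : Y b = 1) :
    IsSelfAdjoint (Y' b) := by
  have hself := hY.deriv_sub_star_deriv hY hP hP hPsa hYa hYb hYa hYb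
  simp only [sub_self, mul_zero, zero_mul, intervalIntegral.integral_zero, neg_zero] at hself
  exact (sub_eq_zero.1 hself).symm

theorem hasDerivWithinAt_deriv_jacobiSolution {S : Set ℝ} {s : ℝ} {R Rs U Ut : ℝ → ℝ → A}
    (hS : Convex ℝ S) (hSc : IsCompact S) (hs : s ∈ S)
    (hR : ∀ σ ∈ S, ContinuousOn (R σ) (uIcc a b))
    (hRs : ∀ σ ∈ S, ∀ t ∈ uIcc a b, HasDerivWithinAt (R · t) (Rs σ t) S σ)
    (hRs_cont : ContinuousOn (uncurry Rs) (S ×ˢ uIcc a b))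
    (hR_sa : ∀ t ∈ uIcc a b, IsSelfAdjoint (R s t))
    (hU_cont : ContinuousOn (uncurry U) (S ×ˢ uIcc a b))
    (hU : ∀ σ ∈ S, IsJacobiSolutionOn (R σ) (U σ) (Ut σ) (uIcc a b))
    (hUa : ∀ σ ∈ S, U σ a = 0) (hUb : ∀ σ ∈ S, U σ b = 1) :
    HasDerivWithinAt (Ut · b) (-∫ t in a..b, star (U s t) * Rs s t * U s t) S s := by
  rw [hasDerivWithinAt_iff_tendsto_slope]
  refine (tendsto_intervalIntegral_mul_slope_mul hS hSc hs (hU s hs).continuousOn.star hR hRs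
    hRs_cont hU_cont).neg.congr' ?_
  filter_upwards [self_mem_nhdsWithin] with σ hσ
  have hsa : IsSelfAdjoint (Ut s b) :=
    (hU s hs).isSelfAdjoint_deriv (hR s hs) hR_sa (hUa s hs) (hUb s hs)
  have hdiff : Ut σ b - Ut s b = -∫ t in a..b, star (U s t) * (R σ t - R s t) * U σ t := by
    rw [← (hU s hs).deriv_sub_star_deriv (hU σ hσ.1) (hR s hs) (hR σ hσ.1) hR_sa (hUa s hs)
      (hUb s hs) (hUa σ hσ.1) (hUb σ hσ.1), hsa.star_eq]
  simp only [slope_def_module, hdiff, smul_neg, mul_smul_comm, smul_mul_assoc,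
    intervalIntegral.integral_smul]

-- The unstable case is `a < b`, the stable case `b < a`.
theorem hopf_formula_unstable_general {c d : ℝ} {R Rs U Ut : ℝ → ℝ → A}
    (hR : ∀ s ∈ uIcc c d, ContinuousOn (R s) (uIcc a b))
    (hRs : ∀ s ∈ uIcc c d, ∀ t ∈ uIcc a b, HasDerivWithinAt (R · t) (Rs s t) (uIcc c d) s)
    (hRs_cont : ContinuousOn (uncurry Rs) (uIcc c d ×ˢ uIcc a b))
    (hR_sa : ∀ s ∈ uIcc c d, ∀ t ∈ uIcc a b, IsSelfAdjoint (R s t))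
    (hU_cont : ContinuousOn (uncurry U) (uIcc c d ×ˢ uIcc a b))
    (hU : ∀ s ∈ uIcc c d, IsJacobiSolutionOn (R s) (U s) (Ut s) (uIcc a b))
    (hUa : ∀ s ∈ uIcc c d, U s a = 0) (hUb : ∀ s ∈ uIcc c d, U s b = 1) :
    Ut d b - Ut c b = -∫ s in c..d, ∫ t in a..b, star (U s t) * Rs s t * U s t := by
  rw [← intervalIntegral.integral_neg]
  refine (intervalIntegral_eq_sub_of_hasDerivWithinAt (fun s hs =>
    hasDerivWithinAt_deriv_jacobiSolution (convex_uIcc c d) isCompact_uIcc hs hR hRs hRs_cont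
      (hR_sa s hs) hU_cont hU hUa hUb) ?_).symm
  exact (continuousOn_intervalIntegral_of_isCompact
    (f := fun s t => star (U s t) * Rs s t * U s t) isCompact_uIcc
    ((hU_cont.star.mul hRs_cont).mul hU_cont)).neg

end NormedAlgebra

section Matrix

variable {m n : Type*}

theorem continuousOn_matrix_iff {X α : Type*} [TopologicalSpace X] [TopologicalSpace α]
    {M : X → Matrix m n α} {S : Set X} :
    ContinuousOn M S ↔ ∀ i j, ContinuousOn (fun x => M x i j) S :=
  continuousOn_pi.trans <| forall_congr' fun _ => continuousOn_pi

theorem hasDerivWithinAt_matrix_iff [Finite m] [Finite n] {𝕜 : Type*} [NontriviallyNormedField 𝕜]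
    {M : 𝕜 → Matrix m n 𝕜} {M' : Matrix m n 𝕜} {S : Set 𝕜} {t : 𝕜} :
    HasDerivWithinAt M M' S t ↔ ∀ i j, HasDerivWithinAt (fun τ => M τ i j) (M' i j) S t := by
  have := Fintype.ofFinite n
  exact hasDerivWithinAt_pi.trans <| forall_congr' fun _ => hasDerivWithinAt_pi

variable [Fintype m] [Fintype n] [DecidableEq n]

theorem intervalIntegral_matrix_apply {M : ℝ → Matrix m n ℝ} {a b : ℝ}
    (hM : IntervalIntegrable M volume a b) (i : m) (j : n) :
    (∫ t in a..b, M t) i j = ∫ t in a..b, M t i j :=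
  ((entryLinearMap ℝ ℝ i j).toContinuousLinearMap.intervalIntegral_comp_comm hM).symm

theorem intervalIntegral_intervalIntegral_matrix_apply {M : ℝ → ℝ → Matrix m n ℝ} {a b c d : ℝ}
    (hM : ContinuousOn (uncurry M) (uIcc c d ×ˢ uIcc a b)) (i : m) (j : n) :
    (∫ s in c..d, ∫ t in a..b, M s t) i j = ∫ s in c..d, ∫ t in a..b, M s t i j := by
  rw [intervalIntegral_matrix_apply
    (continuousOn_intervalIntegral_of_isCompact isCompact_uIcc hM).intervalIntegrable]
  exact intervalIntegral.integral_congr fun s hs =>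
    intervalIntegral_matrix_apply (hM.uncurry_left s hs).intervalIntegrable i j

end Matrix

/-- Hopf-type formula (unstable case, matrix form).
If `U(s,·)` solves the matrix Jacobi equation `∂ₜ²U + R·U = 0` on `[−r,0]` with
`U(s,0) = Id`, `U(s,−r) = 0`, where `R` is C¹ and symmetric and `U` is C² on
`[0,1] × [−r,0]`, then
`∂ₜU(1,0) − ∂ₜU(0,0) = − ∫₀¹ ∫_{−r}⁰ U(s,t)ᵀ · (∂ₛR(s,t)) · U(s,t) dt ds`
(entrywise). -/
theorem hopf_formula_unstable (n : ℕ) (hn : 1 ≤ n) (r : ℝ) (hr : 0 < r)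
    (R U Ut Utt Rs : ℝ → ℝ → Matrix (Fin n) (Fin n) ℝ)
    -- R is continuously differentiable on [0,1] × [−r,0], with s-partial Rs
    (hR_cd : ∀ i j, ContDiffOn ℝ 1 (fun p : ℝ × ℝ => R p.1 p.2 i j)
      (Icc 0 1 ×ˢ Icc (-r) 0))
    (hRs : ∀ s ∈ Icc (0:ℝ) 1, ∀ t ∈ Icc (-r) (0:ℝ), ∀ i j,
      HasDerivWithinAt (fun σ => R σ t i j) (Rs s t i j) (Icc 0 1) s)
    (hRs_cont : ∀ i j, ContinuousOn (fun p : ℝ × ℝ => Rs p.1 p.2 i j)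
      (Icc 0 1 ×ˢ Icc (-r) 0))
    -- R(s,t) is symmetric
    (hR_symm : ∀ s ∈ Icc (0:ℝ) 1, ∀ t ∈ Icc (-r) (0:ℝ), (R s t).IsSymm)
    -- U is twice continuously differentiable on [0,1] × [−r,0],
    -- with first and second t-partials Ut and Utt
    (hU_cd : ∀ i j, ContDiffOn ℝ 2 (fun p : ℝ × ℝ => U p.1 p.2 i j)
      (Icc 0 1 ×ˢ Icc (-r) 0))
    (hUt : ∀ s ∈ Icc (0:ℝ) 1, ∀ t ∈ Icc (-r) (0:ℝ), ∀ i j,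
      HasDerivWithinAt (fun τ => U s τ i j) (Ut s t i j) (Icc (-r) 0) t)
    (hUtt : ∀ s ∈ Icc (0:ℝ) 1, ∀ t ∈ Icc (-r) (0:ℝ), ∀ i j,
      HasDerivWithinAt (fun τ => Ut s τ i j) (Utt s t i j) (Icc (-r) 0) t)
    -- the Jacobi equation and the boundary conditions
    (hJac : ∀ s ∈ Icc (0:ℝ) 1, ∀ t ∈ Icc (-r) (0:ℝ), Utt s t + R s t * U s t = 0)
    (hU0 : ∀ s ∈ Icc (0:ℝ) 1, U s 0 = 1)
    (hUmr : ∀ s ∈ Icc (0:ℝ) 1, U s (-r) = 0) :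
    ∀ i j, (Ut 1 0 - Ut 0 0) i j
      = -∫ s in (0:ℝ)..1, ∫ t in (-r)..(0:ℝ), ((U s t)ᵀ * Rs s t * U s t) i j := by
  simp only [← uIcc_of_le (neg_nonpos.2 hr.le), ← uIcc_of_le (zero_le_one' ℝ)] at *
  have hU_cont := continuousOn_matrix_iff.2 fun i j => (hU_cd i j).continuousOn
  have hR_cont := continuousOn_matrix_iff.2 fun i j => (hR_cd i j).continuousOn
  have hRs_cont := continuousOn_matrix_iff.2 hRs_cont
  have hR_sa : ∀ s ∈ uIcc (0 : ℝ) 1, ∀ t ∈ uIcc (-r) 0, IsSelfAdjoint (R s t) :=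
    fun s hs t ht => (isHermitian_iff_isSymm.2 (hR_symm s hs t ht)).isSelfAdjoint
  have hJacobi : ∀ s ∈ uIcc (0 : ℝ) 1, IsJacobiSolutionOn (R s) (U s) (Ut s) (uIcc (-r) 0) :=
    fun s hs => ⟨fun t ht => hasDerivWithinAt_matrix_iff.2 (hUt s hs t ht), fun t ht =>
      eq_neg_of_add_eq_zero_left (hJac s hs t ht) ▸ hasDerivWithinAt_matrix_iff.2 (hUtt s hs t ht)⟩
  have hformula := hopf_formula_unstable_general (fun s hs => hR_cont.uncurry_left s hs)
    (fun s hs t ht => hasDerivWithinAt_matrix_iff.2 (hRs s hs t ht)) hRs_cont hR_sa hU_cont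
    hJacobi hUmr hU0
  intro i j
  rw [hformula, Matrix.neg_apply, intervalIntegral_intervalIntegral_matrix_apply
    ((hU_cont.star.mul hRs_cont).mul hU_cont)]
  simp only [star_eq_conjTranspose, conjTranspose_eq_transpose_of_trivial]
end

section
/- Let n ≥ 1 and r > 0. Let R : [0,1] × [0,r] → Mat_n(ℝ) be continuously differentiable with R(s,t) symmetric for every (s,t), and let S : [0,1] × [0,r] → Mat_n(ℝ) be twice continuously differentiable such that for every s ∈ [0,1]: ∂ₜ²S(s,t) + R(s,t)·S(s,t) = 0 for all t ∈ [0,r], S(s,0) = Id, and S(s,r) = 0. Assume there are continuous functions b : [0,r] → ℝ and g : [0,1] → ℝ with ‖S(s,t)‖ ≤ b(t) and ‖∂ₛR(s,t)‖ ≤ g(s) for all (s,t) ∈ [0,1] × [0,r]. Then ‖∂ₜS(1,0) − ∂ₜS(0,0)‖ ≤ (∫₀ʳ b(t)² dt) · (∫₀¹ g(s) ds). -/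
/-!
If `U` and `V` solve `U'' + P U = 0` and `V'' + Q V = 0` with `P` self-adjoint, their Wronskian
`W = U⋆ V' - (U')⋆ V` satisfies `W' = U⋆ (P - Q) V`. For the boundary values `1` and `0`, `W`
vanishes at the right end and equals `V' - (U')⋆` at the left end. The case `V = U` shows that `U'`
is self-adjoint at the left end, so `‖V' - U'‖` there is at most the integral of `‖U⋆ (P - Q) V‖`.
For `P = R(0, ·)` and `Q = R(1, ·)` the integrand is at most `b² ∫ g`. Comparing the two end curves
directly, rather than differentiating along the family, avoids any derivative of `S` in `s`.
-/

open Matrix MeasureTheory Set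

/-- The operator norm of a real `n × n` matrix with respect to the Euclidean
norm on `ℝⁿ`. -/
noncomputable def opNorm {n : ℕ} (A : Matrix (Fin n) (Fin n) ℝ) : ℝ :=
  ‖Matrix.toEuclideanCLM (𝕜 := ℝ) A‖

lemma norm_sub_le_integral_of_hasDerivWithinAt_of_le {E : Type*} [NormedAddCommGroup E]
    [NormedSpace ℝ E] {a b : ℝ} {F F' : ℝ → E} {B : ℝ → ℝ} (hab : a ≤ b)
    (hF : ∀ t ∈ Icc a b, HasDerivWithinAt F (F' t) (Icc a b) t)
    (hF' : ∀ t ∈ Icc a b, ‖F' t‖ ≤ B t) (hB : IntervalIntegrable B volume a b) :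
    ‖F b - F a‖ ≤ ∫ t in a..b, B t := by
  have hasDerivAt_interior : ∀ t ∈ Ioo a b, HasDerivAt F (F' t) t := fun t ht =>
    (hF t (Ioo_subset_Icc_self ht)).hasDerivAt (Icc_mem_nhds ht.1 ht.2)
  refine norm_sub_le_integral_of_norm_deriv_le_of_le hab
    (fun t ht => (hF t ht).continuousWithinAt)
    (fun t ht => (hasDerivAt_interior t ht).differentiableAt.differentiableWithinAt)
    (.of_forall fun t ht => ?_) hB
  rw [(hasDerivAt_interior t ht).deriv]
  exact hF' t (Ioo_subset_Icc_self ht)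

section JacobiTensor

variable {A : Type*} [NormedRing A] [NormedAlgebra ℝ A]

/-- `U` solves the Jacobi equation `U'' + K U = 0` on `I`. The algebra `A` stands for the
endomorphisms of the normal space, identified along a geodesic by parallel transport; the first
derivative `U'` is part of the data and all derivatives are taken within `I`. -/
structure IsJacobiTensorOn (K U U' : ℝ → A) (I : Set ℝ) : Prop where
  hasDerivWithinAt : ∀ t ∈ I, HasDerivWithinAt U (U' t) I t
  hasDerivWithinAt_deriv : ∀ t ∈ I, HasDerivWithinAt U' (-(K t * U t)) I t

/-- `U` is a Jacobi tensor on `[a, b]` with boundary values `U a = 1` and `U b = 0`; for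
`[a, b] = [0, r]` this is the tensor written `S_{v,r}` in the paper. -/
structure IsBoundaryJacobiTensor (K U U' : ℝ → A) (a b : ℝ) : Prop
    extends IsJacobiTensorOn K U U' (Icc a b) where
  left_eq_one : U a = 1
  right_eq_zero : U b = 0

variable [StarRing A]

/-- The operator-valued Wronskian of two solutions `U`, `V` of Jacobi equations, with given first
derivatives `U'`, `V'`. Taking adjoints of the `U` factors makes it constant when both solve the
same equation with self-adjoint coefficient. -/
def wronskian (U U' V V' : ℝ → A) (t : ℝ) : A :=
  star (U t) * V' t - star (U' t) * V t

variable [NormedStarGroup A] [StarModule ℝ A] {P Q U U' V V' : ℝ → A} {a b : ℝ}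

lemma IsJacobiTensorOn.hasDerivWithinAt_wronskian {I : Set ℝ} {t : ℝ}
    (hU : IsJacobiTensorOn P U U' I) (hV : IsJacobiTensorOn Q V V' I) (ht : t ∈ I)
    (hP : IsSelfAdjoint (P t)) :
    HasDerivWithinAt (wronskian U U' V V') (star (U t) * (P t - Q t) * V t) I t := by
  have hW := ((hU.hasDerivWithinAt t ht).star.mul (hV.hasDerivWithinAt_deriv t ht)).sub
    ((hU.hasDerivWithinAt_deriv t ht).star.mul (hV.hasDerivWithinAt t ht))
  refine hW.congr_deriv ?_
  rw [star_neg, star_mul, hP.star_eq]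
  noncomm_ring

namespace IsBoundaryJacobiTensor

lemma norm_deriv_left_sub_star_le {B : ℝ → ℝ} (hab : a ≤ b)
    (hU : IsBoundaryJacobiTensor P U U' a b) (hV : IsBoundaryJacobiTensor Q V V' a b)
    (hP : ∀ t ∈ Icc a b, IsSelfAdjoint (P t))
    (hB : ∀ t ∈ Icc a b, ‖star (U t) * (P t - Q t) * V t‖ ≤ B t)
    (hBi : IntervalIntegrable B volume a b) :
    ‖V' a - star (U' a)‖ ≤ ∫ t in a..b, B t := by
  have wronskian_left : wronskian U U' V V' a = V' a - star (U' a) := by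
    simp only [wronskian, hU.left_eq_one, hV.left_eq_one, star_one, one_mul, mul_one]
  have wronskian_right : wronskian U U' V V' b = 0 := by
    simp only [wronskian, hU.right_eq_zero, hV.right_eq_zero, star_zero, zero_mul, mul_zero,
      sub_zero]
  have hW := norm_sub_le_integral_of_hasDerivWithinAt_of_le hab (fun t ht =>
    hU.toIsJacobiTensorOn.hasDerivWithinAt_wronskian hV.toIsJacobiTensorOn ht (hP t ht)) hB hBi
  rwa [wronskian_left, wronskian_right, zero_sub, norm_neg] at hW

lemma isSelfAdjoint_deriv_left (hab : a ≤ b) (hU : IsBoundaryJacobiTensor P U U' a b)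
    (hP : ∀ t ∈ Icc a b, IsSelfAdjoint (P t)) : IsSelfAdjoint (U' a) := by
  have norm_le_zero : ‖U' a - star (U' a)‖ ≤ ∫ _ in a..b, (0 : ℝ) :=
    hU.norm_deriv_left_sub_star_le hab hU hP (fun t _ => by simp) intervalIntegrable_const
  rw [intervalIntegral.integral_zero, norm_le_zero_iff, sub_eq_zero] at norm_le_zero
  exact norm_le_zero.symm

lemma norm_deriv_left_sub_le {u v k : ℝ → ℝ} (hab : a ≤ b)
    (hU : IsBoundaryJacobiTensor P U U' a b) (hV : IsBoundaryJacobiTensor Q V V' a b)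
    (hP : ∀ t ∈ Icc a b, IsSelfAdjoint (P t))
    (hUu : ∀ t ∈ Icc a b, ‖U t‖ ≤ u t) (hVv : ∀ t ∈ Icc a b, ‖V t‖ ≤ v t)
    (hPQ : ∀ t ∈ Icc a b, ‖Q t - P t‖ ≤ k t)
    (hi : IntervalIntegrable (fun t => u t * k t * v t) volume a b) :
    ‖V' a - U' a‖ ≤ ∫ t in a..b, u t * k t * v t := by
  have hbound : ∀ t ∈ Icc a b, ‖star (U t) * (P t - Q t) * V t‖ ≤ u t * k t * v t := by
    intro t ht
    have hu : 0 ≤ u t := (norm_nonneg _).trans (hUu t ht)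
    have hk : 0 ≤ k t := (norm_nonneg _).trans (hPQ t ht)
    calc ‖star (U t) * (P t - Q t) * V t‖
        ≤ ‖star (U t)‖ * ‖P t - Q t‖ * ‖V t‖ := norm_mul₃_le
      _ = ‖U t‖ * ‖Q t - P t‖ * ‖V t‖ := by rw [norm_star, norm_sub_rev]
      _ ≤ u t * k t * v t := by gcongr; exacts [hUu t ht, hPQ t ht, hVv t ht]
  simpa only [(hU.isSelfAdjoint_deriv_left hab hP).star_eq] using
    hU.norm_deriv_left_sub_star_le hab hV hP hbound hi

end IsBoundaryJacobiTensor

theorem second_fundamental_form_difference_bound_general {R Rs S St : ℝ → ℝ → A}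
    {β g : ℝ → ℝ} {s₀ s₁ : ℝ} (hs₀₁ : s₀ ≤ s₁) (hab : a ≤ b)
    (hRs : ∀ s ∈ Icc s₀ s₁, ∀ t ∈ Icc a b,
      HasDerivWithinAt (fun σ => R σ t) (Rs s t) (Icc s₀ s₁) s)
    (hR : ∀ t ∈ Icc a b, IsSelfAdjoint (R s₀ t))
    (hS₀ : IsBoundaryJacobiTensor (R s₀) (S s₀) (St s₀) a b)
    (hS₁ : IsBoundaryJacobiTensor (R s₁) (S s₁) (St s₁) a b)
    (hβ : IntervalIntegrable (fun t => β t ^ 2) volume a b)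
    (hg : IntervalIntegrable g volume s₀ s₁)
    (hSβ₀ : ∀ t ∈ Icc a b, ‖S s₀ t‖ ≤ β t) (hSβ₁ : ∀ t ∈ Icc a b, ‖S s₁ t‖ ≤ β t)
    (hRg : ∀ s ∈ Icc s₀ s₁, ∀ t ∈ Icc a b, ‖Rs s t‖ ≤ g s) :
    ‖St s₁ a - St s₀ a‖ ≤ (∫ t in a..b, β t ^ 2) * ∫ s in s₀..s₁, g s := by
  have norm_sub_R_le : ∀ t ∈ Icc a b, ‖R s₁ t - R s₀ t‖ ≤ ∫ s in s₀..s₁, g s := fun t ht =>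
    norm_sub_le_integral_of_hasDerivWithinAt_of_le hs₀₁ (fun s hs => hRs s hs t ht)
      (fun s hs => hRg s hs t ht) hg
  have integrand_eq : (fun t => β t * (∫ s in s₀..s₁, g s) * β t) =
      fun t => β t ^ 2 * ∫ s in s₀..s₁, g s := by
    funext t
    ring
  calc ‖St s₁ a - St s₀ a‖
      ≤ ∫ t in a..b, β t * (∫ s in s₀..s₁, g s) * β t :=
        hS₀.norm_deriv_left_sub_le hab hS₁ hR hSβ₀ hSβ₁ norm_sub_R_le
          (integrand_eq ▸ hβ.mul_const _)
    _ = (∫ t in a..b, β t ^ 2) * ∫ s in s₀..s₁, g s := by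
        rw [integrand_eq, intervalIntegral.integral_mul_const]

end JacobiTensor

lemma hasDerivWithinAt_matrix {𝕜 E m n : Type*} [NontriviallyNormedField 𝕜]
    [NormedAddCommGroup E] [NormedSpace 𝕜 E] [Finite n] {F : 𝕜 → Matrix m n E}
    {F' : Matrix m n E} {I : Set 𝕜} {t : 𝕜} :
    HasDerivWithinAt F F' I t ↔ ∀ i j, HasDerivWithinAt (fun τ => F τ i j) (F' i j) I t := by
  have := Fintype.ofFinite n
  exact hasDerivWithinAt_pi.trans (forall_congr' fun _ => hasDerivWithinAt_pi)

open scoped Matrix.Norms.L2Operator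

lemma isBoundaryJacobiTensor_matrix {n : Type*} [Fintype n] [DecidableEq n]
    {K U U' U'' : ℝ → Matrix n n ℝ} {a b : ℝ}
    (hU : ∀ t ∈ Icc a b, ∀ i j, HasDerivWithinAt (fun τ => U τ i j) (U' t i j) (Icc a b) t)
    (hU' : ∀ t ∈ Icc a b, ∀ i j, HasDerivWithinAt (fun τ => U' τ i j) (U'' t i j) (Icc a b) t)
    (hJac : ∀ t ∈ Icc a b, U'' t + K t * U t = 0) (ha : U a = 1) (hb : U b = 0) :
    IsBoundaryJacobiTensor K U U' a b where
  hasDerivWithinAt t ht := hasDerivWithinAt_matrix.2 (hU t ht)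
  hasDerivWithinAt_deriv t ht :=
    eq_neg_of_add_eq_zero_left (hJac t ht) ▸ hasDerivWithinAt_matrix.2 (hU' t ht)
  left_eq_one := ha
  right_eq_zero := hb

/-- matrix form of the estimate underlying Theorem 2.9:
under the hypotheses of the stable Hopf formula, if `‖S(s,t)‖ ≤ b(t)` and
`‖∂ₛR(s,t)‖ ≤ g(s)` for continuous `b`, `g`, then
`‖∂ₜS(1,0) − ∂ₜS(0,0)‖ ≤ (∫₀ʳ b(t)² dt)·(∫₀¹ g(s) ds)`. -/
theorem second_fundamental_form_difference_bound (n : ℕ) (hn : 1 ≤ n)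
    (r : ℝ) (hr : 0 < r)
    (R S St Stt Rs : ℝ → ℝ → Matrix (Fin n) (Fin n) ℝ)
    -- R is continuously differentiable on [0,1] × [0,r], with s-partial Rs
    (hR_cd : ∀ i j, ContDiffOn ℝ 1 (fun p : ℝ × ℝ => R p.1 p.2 i j)
      (Icc 0 1 ×ˢ Icc 0 r))
    (hRs : ∀ s ∈ Icc (0:ℝ) 1, ∀ t ∈ Icc (0:ℝ) r, ∀ i j,
      HasDerivWithinAt (fun σ => R σ t i j) (Rs s t i j) (Icc 0 1) s)
    (hRs_cont : ∀ i j, ContinuousOn (fun p : ℝ × ℝ => Rs p.1 p.2 i j)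
      (Icc 0 1 ×ˢ Icc 0 r))
    -- R(s,t) is symmetric
    (hR_symm : ∀ s ∈ Icc (0:ℝ) 1, ∀ t ∈ Icc (0:ℝ) r, (R s t).IsSymm)
    -- S is twice continuously differentiable on [0,1] × [0,r],
    -- with first and second t-partials St and Stt
    (hS_cd : ∀ i j, ContDiffOn ℝ 2 (fun p : ℝ × ℝ => S p.1 p.2 i j)
      (Icc 0 1 ×ˢ Icc 0 r))
    (hSt : ∀ s ∈ Icc (0:ℝ) 1, ∀ t ∈ Icc (0:ℝ) r, ∀ i j,
      HasDerivWithinAt (fun τ => S s τ i j) (St s t i j) (Icc 0 r) t)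
    (hStt : ∀ s ∈ Icc (0:ℝ) 1, ∀ t ∈ Icc (0:ℝ) r, ∀ i j,
      HasDerivWithinAt (fun τ => St s τ i j) (Stt s t i j) (Icc 0 r) t)
    -- the Jacobi equation and the boundary conditions
    (hJac : ∀ s ∈ Icc (0:ℝ) 1, ∀ t ∈ Icc (0:ℝ) r, Stt s t + R s t * S s t = 0)
    (hS0 : ∀ s ∈ Icc (0:ℝ) 1, S s 0 = 1)
    (hSr : ∀ s ∈ Icc (0:ℝ) 1, S s r = 0)
    -- the bounds ‖S(s,t)‖ ≤ b(t) and ‖∂ₛR(s,t)‖ ≤ g(s)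
    (b g : ℝ → ℝ)
    (hb_cont : ContinuousOn b (Icc 0 r)) (hg_cont : ContinuousOn g (Icc 0 1))
    (hSb : ∀ s ∈ Icc (0:ℝ) 1, ∀ t ∈ Icc (0:ℝ) r, opNorm (S s t) ≤ b t)
    (hRg : ∀ s ∈ Icc (0:ℝ) 1, ∀ t ∈ Icc (0:ℝ) r, opNorm (Rs s t) ≤ g s) :
    opNorm (St 1 0 - St 0 0)
      ≤ (∫ t in (0:ℝ)..r, b t ^ 2) * ∫ s in (0:ℝ)..1, g s := by
  have zero_mem : (0 : ℝ) ∈ Icc (0 : ℝ) 1 := left_mem_Icc.2 zero_le_one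
  have one_mem : (1 : ℝ) ∈ Icc (0 : ℝ) 1 := right_mem_Icc.2 zero_le_one
  have hS : ∀ s ∈ Icc (0 : ℝ) 1, IsBoundaryJacobiTensor (R s) (S s) (St s) 0 r := fun s hs =>
    isBoundaryJacobiTensor_matrix (hSt s hs) (hStt s hs) (hJac s hs) (hS0 s hs) (hSr s hs)
  -- `opNorm` unfolds definitionally to the `L2Operator` norm, so `hSb`, `hRg` apply as they stand.
  exact second_fundamental_form_difference_bound_general zero_le_one hr.le
    (fun s hs t ht => hasDerivWithinAt_matrix.2 (hRs s hs t ht))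
    (fun t ht => (isHermitian_iff_isSymm.2 (hR_symm 0 zero_mem t ht)).isSelfAdjoint)
    (hS 0 zero_mem) (hS 1 one_mem) ((hb_cont.pow 2).intervalIntegrable_of_Icc hr.le)
    (hg_cont.intervalIntegrable_of_Icc zero_le_one) (hSb 0 zero_mem) (hSb 1 one_mem) hRg
end
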